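/- Let κ be an infinite cardinal with κ^ω = κ and G = ℤ^(κ). Let (p_k : k ∈ ω) be pairwise Rudin–Keisler incomparable selective ultrafilters on ω, and for each k ∈ ω let ℱ^k be a countable subset of G^ω such that the classes [f]_{p_k} (f ∈ ℱ^k) are pairwise distinct and {[f]_{p_k} : f ∈ ℱ^k} ∪ {[χ⃗_ξ]_{p_k} : ξ < κ} is a ℚ-linearly independent subset of Ult(ℚ, p_k). For every f ∈ ⋃_k ℱ^k let ξ_f < κ be given. Let d, d' ∈ G be nonzero with disjoint supports, and let D ⊆ κ be a countably infinite set containing ω ∪ supp d ∪ supp d', containing ⋃_{n∈ω} supp f(n) for every f ∈ ⋃_k ℱ^k, and containing ξ_f for every f ∈ ⋃_k ℱ^k. Then there exists a group homomorphism φ : ℤ^(D) → 𝕋 such that φ(d) ≠ 0, φ(d') ≠ 0, and for every k ∈ ω and f ∈ ℱ^k the sequence (φ(f(n)) : n ∈ ω) has p_k-limit φ(χ_{ξ_f}) in 𝕋. -/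

import Mathlib

open Cardinal Filter Set Pointwise

noncomputable section

/-- A free (nonprincipal) ultrafilter on ω. -/
def IsFreeUltrafilter (p : Ultrafilter ℕ) : Prop := ∀ n : ℕ, p ≠ pure n

/-- A selective ultrafilter on ω. -/
def IsSelective (p : Ultrafilter ℕ) : Prop :=
  IsFreeUltrafilter p ∧
  ∀ A : ℕ → Set ℕ,
    (∀ k, (A k).Nonempty) → (Pairwise fun k l => Disjoint (A k) (A l)) →
    (⋃ k, A k) = Set.univ →
    (∃ k, A k ∈ p) ∨ ∃ B ∈ p, ∀ k, ∃! n, n ∈ B ∩ A k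

/-- Rudin–Keisler order: `U ≤ V` iff `V = f_*(U)` for some `f`. -/
def RKle (U V : Ultrafilter ℕ) : Prop := ∃ f : ℕ → ℕ, Ultrafilter.map f U = V

/-- Rudin–Keisler incomparability. -/
def RKIncomp (U V : Ultrafilter ℕ) : Prop := ¬ RKle U V ∧ ¬ RKle V U

/-- The index set of order type (the initial ordinal of) `κ`. -/
abbrev Idx (κ : Cardinal) : Type _ := ↥(Set.Iio κ.ord)

/-- The free abelian group `ℤ^(κ)` of finitely supported integer functions on `κ`. -/
abbrev GZ (κ : Cardinal) := Idx κ →₀ ℤ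

/-- The ℚ-vector space `ℚ^(κ)` of finitely supported rational functions on `κ`. -/
abbrev GQ (κ : Cardinal) := Idx κ →₀ ℚ

/-- The canonical embedding `ℤ^(κ) → ℚ^(κ)`. -/
def toQ (κ : Cardinal) (f : GZ κ) : GQ κ :=
  Finsupp.mapRange (Int.cast : ℤ → ℚ) Int.cast_zero f

/-- The characteristic function `χ_ξ`. -/
def chi (κ : Cardinal) (ξ : Idx κ) : GZ κ := Finsupp.single ξ 1

/-- The class `[f]_p` of a sequence `f : ω → ℤ^(κ)` in the ultrapower
`Ult(ℚ, p) = (ℚ^(κ))^ω / p`, realized as a germ. -/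
def cls (κ : Cardinal) (p : Ultrafilter ℕ) (f : ℕ → GZ κ) :
    Filter.Germ (↑p : Filter ℕ) (GQ κ) :=
  (↑(fun n => toQ κ (f n)) : Filter.Germ (↑p : Filter ℕ) (GQ κ))

/-- The class `[χ⃗_ξ]_p` of the constant sequence with value `χ_ξ`. -/
def clsChi (κ : Cardinal) (p : Ultrafilter ℕ) (ξ : Idx κ) :
    Filter.Germ (↑p : Filter ℕ) (GQ κ) :=
  cls κ p (fun _ => chi κ ξ)

/-- `cls` as an additive homomorphism. -/
def clsHom (κ : Cardinal) (p : Ultrafilter ℕ) :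
    (ℕ → GZ κ) →+ Filter.Germ (↑p : Filter ℕ) (GQ κ) :=
  AddMonoidHom.mk' (cls κ p) (by
    intro a b
    unfold cls
    have h : (fun n => toQ κ ((a + b) n)) =
        (fun n => toQ κ (a n)) + (fun n => toQ κ (b n)) := by
      funext n
      simp only [Pi.add_apply, toQ]
      exact Finsupp.mapRange_add (fun x y => by push_cast; ring) _ _
    rw [h, ← Filter.Germ.coe_add])

/-- `Ult(ℤ, p)`: the subgroup of `Ult(ℚ, p)` consisting of classes of
integer-valued sequences. -/
def UltZ (κ : Cardinal) (p : Ultrafilter ℕ) :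
    AddSubgroup (Filter.Germ (↑p : Filter ℕ) (GQ κ)) :=
  (clsHom κ p).range

/-- `ℱ` is linearly independent mod `A*`. -/
def LinIndepMod (κ : Cardinal) (A : Set ℕ) (F : Set (ℕ → GZ κ)) : Prop :=
  ∀ p : Ultrafilter ℕ, IsFreeUltrafilter p → A ∈ p →
    (∀ f ∈ F, ∀ g ∈ F, f ≠ g → cls κ p f ≠ cls κ p g) ∧
    LinearIndependent ℚ
      (Sum.elim (fun f : F => cls κ p ↑f) (fun ξ : Idx κ => clsChi κ p ξ))

/-- `ℰ` is maximal (w.r.t. inclusion) among subsets linearly independent mod `A*`. -/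
def MaximalLinIndepMod (κ : Cardinal) (A : Set ℕ) (E : Set (ℕ → GZ κ)) : Prop :=
  LinIndepMod κ A E ∧ ∀ E' : Set (ℕ → GZ κ), LinIndepMod κ A E' → E ⊆ E' → E' = E

/-- A finite tower in ω: a finite decreasing sequence of infinite subsets of ω. -/
def IsTower (T : List (Set ℕ)) : Prop :=
  (∀ A ∈ T, A.Infinite) ∧
  ∀ i : ℕ, ∀ h : i + 1 < T.length, T.get ⟨i + 1, h⟩ ⊆ T.get ⟨i, Nat.lt_of_succ_lt h⟩

/-- `l(T)`: the last term of a finite tower, with `l(∅) = ω`. -/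
def lastOf (T : List (Set ℕ)) : Set ℕ := T.getLastD Set.univ

/-- `x` is a `p`-limit of the sequence `s`. -/
def IsPLim {X : Type*} [TopologicalSpace X] (p : Ultrafilter ℕ) (s : ℕ → X) (x : X) : Prop :=
  ∀ U ∈ nhds x, {n | s n ∈ U} ∈ p

/-- Countable compactness: every countable open cover has a finite subcover. -/
def CountablyCompactSp (X : Type*) [TopologicalSpace X] : Prop :=
  ∀ 𝒰 : Set (Set X), 𝒰.Countable → (∀ u ∈ 𝒰, IsOpen u) → ⋃₀ 𝒰 = Set.univ →
    ∃ ℱ ⊆ 𝒰, ℱ.Finite ∧ ⋃₀ ℱ = Set.univ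


/-- membership in `ℤ^(D)` from a support condition. -/
lemma mem_suppD {κ : Cardinal} {D : Set (Idx κ)} {x : GZ κ}
    (h : ↑x.support ⊆ D) : x ∈ Finsupp.supported ℤ ℤ D :=
  (Finsupp.mem_supported ℤ x).2 h

lemma chi_mem_suppD {κ : Cardinal} {D : Set (Idx κ)} {ξ : Idx κ}
    (h : ξ ∈ D) : chi κ ξ ∈ Finsupp.supported ℤ ℤ D := by
  apply (Finsupp.mem_supported ℤ _).2
  intro a ha
  have : a ∈ ({ξ} : Finset (Idx κ)) := Finsupp.support_single_subset ha
  rw [Finset.mem_singleton] at this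
  subst this
  exact h

/-!
Given finitely many sequences independent modulo constants along `p` and a finite set `C`, consider
the tuples of the torus that homomorphisms small on `C` can nearly realise at the `n`-th terms, for
`p`-almost every `n`. They form a closed subgroup. A nontrivial integer combination `g n` of the
sequences takes each value only on a `p`-small set, hence has, relative to `C`, arbitrarily large
coordinates, and a homomorphism reading one of these sends `g n` to `1/2` while almost killing `C`.
So no nontrivial character vanishes on the subgroup, which is therefore the whole torus: at
`p`-almost every `n` the values of the sequences can be prescribed with negligible effect on `C`.

Selectivity and incomparability then produce a single increasing sequence of integers that meets
every `p k` and is so sparse that successive corrections can be carried out along it, each moving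
the value at the next term towards the current value at the target. The corrected homomorphisms
converge on the accumulated finite sets, and any accumulation point has the required limits.
-/

section SelectiveUltrafilters

theorem IsFreeUltrafilter.le_cofinite {p : Ultrafilter ℕ} (hp : IsFreeUltrafilter p) :
    (p : Filter ℕ) ≤ cofinite :=
  p.le_cofinite_or_eq_pure.resolve_right fun ⟨n, hn⟩ => hp n hn

namespace IsSelective

variable {p : Ultrafilter ℕ} {α : Type*}

theorem const_or_injOn_of_surjective (hp : IsSelective p) {g : ℕ → ℕ} (hg : g.Surjective) :
    (∃ c, g ⁻¹' {c} ∈ p) ∨ ∃ B ∈ p, InjOn g B := by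
  refine (hp.2 (fun c => g ⁻¹' {c}) (fun c => (singleton_nonempty c).preimage hg)
    (fun c d hcd => (disjoint_singleton.2 hcd).preimage g)
    (iUnion_eq_univ_iff.2 fun n => ⟨g n, rfl⟩)).imp_right ?_
  rintro ⟨B, hB, hunique⟩
  exact ⟨B, hB, fun m hm n hn hmn => (hunique (g n)).unique ⟨hm, hmn⟩ ⟨hn, rfl⟩⟩

theorem const_or_injOn (hp : IsSelective p) (g : ℕ → α) :
    (∃ c, g ⁻¹' {c} ∈ p) ∨ ∃ B ∈ p, InjOn g B := by
  by_cases hfin : (range g).Finite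
  · obtain ⟨c, -, hc⟩ := Ultrafilter.eq_pure_of_finite_mem (f := p.map g) hfin range_mem_map
    exact .inl ⟨c, show {c} ∈ p.map g from hc ▸ Ultrafilter.mem_pure.2 rfl⟩
  · have : Infinite (range g) := Set.Infinite.to_subtype hfin
    have : Countable (range g) := (countable_range g).to_subtype
    obtain ⟨e⟩ : Nonempty (range g ≃ ℕ) := nonempty_equiv_of_countable
    have hsurj : (e ∘ rangeFactorization g).Surjective :=
      e.surjective.comp rangeFactorization_surjective
    refine (hp.const_or_injOn_of_surjective hsurj).imp ?_ ?_
    · rintro ⟨c, hc⟩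
      refine ⟨e.symm c, mem_of_superset hc fun n hn => ?_⟩
      rw [← show e (rangeFactorization g n) = c from hn, e.symm_apply_apply]
      rfl
    · rintro ⟨B, hB, hinj⟩
      exact ⟨B, hB, fun m hm n hn hmn => hinj hm hn (congrArg e (Subtype.ext hmn))⟩

theorem exists_injOn (hp : IsSelective p) {g : ℕ → α} (hg : ∀ c, (g ⁻¹' {c}).Finite) :
    ∃ B ∈ p, InjOn g B :=
  (hp.const_or_injOn g).resolve_left fun ⟨c, hc⟩ =>
    Ultrafilter.compl_mem_iff_notMem.1 (hp.1.le_cofinite (hg c).compl_mem_cofinite) hc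

theorem exists_pseudoIntersection (hp : IsSelective p) {A : ℕ → Set ℕ} (hA : ∀ i, A i ∈ p) :
    ∃ X ∈ p, ∀ i, (X \ A i).Finite := by
  classical
  have hlt : ∀ i, ∀ᶠ n in p, i < n := fun i =>
    hp.1.le_cofinite (Nat.cofinite_eq_atTop ▸ eventually_gt_atTop i)
  have hex : ∀ n, ∃ i, ¬(n ∈ A i ∧ i < n) := fun n => ⟨n, fun h => lt_irrefl n h.2⟩
  rcases hp.const_or_injOn fun n => Nat.find (hex n) with ⟨i, hi⟩ | ⟨X, hX, hinj⟩
  · exfalso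
    obtain ⟨n, rfl, hn⟩ := p.nonempty_of_mem (inter_mem hi (inter_mem (hA i) (hlt i)))
    exact Nat.find_spec (hex n) hn
  · refine ⟨X, hX, fun i =>
      .of_finite_image (.subset (finite_le_nat i) ?_) (hinj.mono sdiff_subset)⟩
    rintro _ ⟨n, hn, rfl⟩
    exact Nat.find_min' (hex n) fun h => hn.2 h.1

theorem exists_pseudoIntersection_of_countable {ι : Type*} [Countable ι] (hp : IsSelective p)
    {A : ι → Set ℕ} (hA : ∀ i, A i ∈ p) : ∃ X ∈ p, ∀ i, (X \ A i).Finite := by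
  cases isEmpty_or_nonempty ι
  · exact ⟨univ, univ_mem, isEmptyElim⟩
  · obtain ⟨e, he⟩ := exists_surjective_nat ι
    exact (hp.exists_pseudoIntersection fun i => hA (e i)).imp
      fun X hX => ⟨hX.1, he.forall.2 hX.2⟩

-- Distinct integers at distance less than `2` have the same half, or their successors do.
theorem exists_mem_separated (hp : IsSelective p) {j : ℕ → ℕ} (hj : ∀ c, (j ⁻¹' {c}).Finite) :
    ∃ Y ∈ p, ∀ m ∈ Y, ∀ n ∈ Y, m ≠ n → j m + 2 ≤ j n ∨ j n + 2 ≤ j m := by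
  have hhalf : ∀ r, ∃ Y ∈ p, InjOn (fun n => (j n + r) / 2) Y := fun r =>
    hp.exists_injOn fun c =>
      ((finite_le_nat (2 * c + 1)).preimage' fun b _ => hj b).subset fun n hn => by
        simp only [mem_preimage, mem_singleton_iff, mem_ofPred_eq] at hn ⊢
        omega
  obtain ⟨Y₀, hY₀, hinj₀⟩ := hhalf 0
  obtain ⟨Y₁, hY₁, hinj₁⟩ := hhalf 1
  refine ⟨Y₀ ∩ Y₁, inter_mem hY₀ hY₁, fun m hm n hn hmn => ?_⟩
  have h₀ := hinj₀.ne hm.1 hn.1 hmn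
  have h₁ := hinj₁.ne hm.2 hn.2 hmn
  omega

end IsSelective

theorem RKle.of_map_eq_map {p q : Ultrafilter ℕ} {α : Type*} {a b : ℕ → α} {Y : Set ℕ}
    (hY : Y ∈ q) (hb : InjOn b Y) (hab : p.map a = q.map b) : RKle p q := by
  refine ⟨Function.invFunOn b Y ∘ a, ?_⟩
  have hinv : Function.invFunOn b Y ∘ b =ᶠ[q] id :=
    mem_of_superset hY fun n hn => hb.leftInvOn_invFunOn hn
  rw [← Ultrafilter.map_map, hab, Ultrafilter.map_map]
  exact Ultrafilter.coe_injective ((map_congr hinv).trans map_id)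

theorem eventually_prod_ne_of_not_rkle {p q : Ultrafilter ℕ} (h : ¬RKle p q) {α : Type*}
    {a b : ℕ → α} {Y : Set ℕ} (hY : Y ∈ q) (hb : InjOn b Y) :
    ∀ᶠ x in (p : Filter ℕ) ×ˢ (q : Filter ℕ), a x.1 ≠ b x.2 := by
  have hne : p.map a ≠ q.map b := fun hab => h (.of_map_eq_map hY hb hab)
  obtain ⟨W, hWp, hWq⟩ : ∃ W ∈ p.map a, Wᶜ ∈ q.map b := by
    by_contra! hall
    exact hne (Ultrafilter.eq_of_le fun W hW => by_contra fun hW' =>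
      hall Wᶜ (Ultrafilter.compl_mem_iff_notMem.2 hW') (by rwa [compl_compl]))
  filter_upwards [prod_mem_prod hWp hWq] with x hx hab
  exact hx.2 (hab ▸ hx.1)

theorem exists_monotone_step_function (h : ℕ → ℕ) : ∃ j : ℕ → ℕ, Monotone j ∧
    (∀ c, (j ⁻¹' {c}).Finite) ∧ ∀ m n, j m + 2 ≤ j n → h m ≤ n := by
  set H : ℕ → ℕ := fun n => partialSups h n + n + 1
  have hH : Monotone H := fun m n hmn => by
    have := (partialSups h).monotone hmn
    simp only [H]; omega
  set a : ℕ → ℕ := fun i => H^[i] 0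
  have ha : ∀ i, a (i + 1) = H (a i) := fun i => Function.iterate_succ_apply' H i 0
  have ha_mono : StrictMono a := strictMono_nat_of_lt_succ fun i => by
    rw [ha]; simp only [H]; omega
  have hex : ∀ n, ∃ i, n < a (i + 1) := fun n => ⟨n, Nat.lt_of_succ_le (ha_mono.id_le (n + 1))⟩
  refine ⟨fun n => Nat.find (hex n), fun m n hmn => Nat.find_min' (hex m) ?_, fun c => ?_,
    fun m n hmn => ?_⟩
  · exact hmn.trans_lt (Nat.find_spec (hex n))
  · refine (finite_lt_nat (a (c + 1))).subset ?_
    rintro n rfl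
    exact Nat.find_spec (hex n)
  · set i := Nat.find (hex m)
    calc h m ≤ partialSups h m := le_partialSups h m
      _ ≤ H m := by simp only [H]; omega
      _ ≤ H (a (i + 1)) := hH (Nat.find_spec (hex m)).le
      _ = a (i + 1 + 1) := (ha _).symm
      _ ≤ n := not_lt.1 (Nat.find_min (hex n) (show i + 1 < Nat.find (hex n) from hmn))

section Family

variable {K : Type*} {p : K → Ultrafilter ℕ}

theorem exists_eventual_bound (hsel : ∀ k, IsSelective (p k)) {A : ℕ → K → Set ℕ}
    (hA : ∀ N k, A N k ∈ p k) {c : K → ℕ} (hc : c.Injective) :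
    ∃ X : K → Set ℕ, (∀ k, X k ∈ p k) ∧
      ∃ h : ℕ → ℕ, ∀ M k, c k ≤ M → ∀ N ≤ M, ∀ n ∈ X k, h M ≤ n → n ∈ A N k := by
  choose X hX hXfin using fun k => (hsel k).exists_pseudoIntersection fun N => hA N k
  have hbound : ∀ M, ∃ b, ∀ k, c k ≤ M → ∀ N ≤ M, ∀ n ∈ X k, b ≤ n → n ∈ A N k := fun M => by
    have hfin : (⋃ k ∈ {k | c k ≤ M}, ⋃ N ∈ Iic M, X k \ A N k).Finite :=
      ((finite_le_nat M).preimage hc.injOn).biUnion fun k _ =>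
        (finite_Iic M).biUnion fun N _ => hXfin k N
    obtain ⟨b, hb⟩ := hfin.bddAbove
    refine ⟨b + 1, fun k hk N hN n hn hbn => by_contra fun hnA => ?_⟩
    exact absurd (hb (mem_biUnion hk (mem_biUnion hN ⟨hn, hnA⟩))) (by omega)
  choose h hh using hbound
  exact ⟨X, hX, h, hh⟩

variable [Countable K]

theorem exists_mem_forall_not_rel (hsel : ∀ k, IsSelective (p k)) {R : ℕ → ℕ → Prop}
    (hsymm : ∀ {m n}, R m n → R n m) (hfin : ∀ m, {n | R m n}.Finite)
    (hR : ∀ k l, k ≠ l → ∀ᶠ x in (p k : Filter ℕ) ×ˢ (p l : Filter ℕ), ¬R x.1 x.2) :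
    ∃ B : K → Set ℕ, (∀ k, B k ∈ p k) ∧
      ∀ k l, k ≠ l → ∀ m ∈ B k, ∀ n ∈ B l, ¬R m n := by
  have hpair : ∀ k l, ∃ U ∈ p k, ∃ W ∈ p l, k ≠ l → ∀ m ∈ U, ∀ n ∈ W, ¬R m n := fun k l => by
    rcases eq_or_ne k l with rfl | hkl
    · exact ⟨univ, univ_mem, univ, univ_mem, fun h => absurd rfl h⟩
    · obtain ⟨U, hU, W, hW, h⟩ := eventually_prod_iff.1 (hR k l hkl)
      exact ⟨{m | U m}, hU, {n | W n}, hW, fun _ m hm n hn => h hm hn⟩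
  choose U hU W hW hUW using hpair
  set V : K → K → Set ℕ := fun k l => U k l ∩ W l k
  have hV : ∀ k l, V k l ∈ p k := fun k l => inter_mem (hU k l) (hW l k)
  choose Z hZ hZfin using fun k => (hsel k).exists_pseudoIntersection_of_countable (hV k)
  obtain ⟨c, hc⟩ := exists_injective_nat K
  refine ⟨fun k => {m ∈ Z k | ∀ l, c l < c k → m ∈ V k l ∧ ∀ n ∈ Z l \ V l k, ¬R n m},
    fun k => ?_, ?_⟩
  · have hlt : {l | c l < c k}.Finite := (finite_lt_nat (c k)).preimage hc.injOn
    refine inter_mem (hZ k) ((eventually_all_finite hlt).2 fun l _ =>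
      Filter.Eventually.and (hV k l) ((eventually_all_finite (hZfin l k)).2 fun n _ => ?_))
    exact (hsel k).1.le_cofinite (hfin n).compl_mem_cofinite
  · intro k l hkl m hm n hn
    wlog hlt : c l < c k generalizing k l m n
    · have hlt' : c k < c l := (not_lt.1 hlt).lt_of_ne (hc.ne hkl)
      exact fun h => this l k hkl.symm n hn m hm hlt' (hsymm h)
    obtain ⟨hmV, hmR⟩ := hm.2 l hlt
    by_cases hnV : n ∈ V l k
    · exact hUW k l hkl m hmV.1 n hnV.2
    · exact fun h => hmR n ⟨hn.1, hnV⟩ (hsymm h)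

theorem exists_mem_separated (hsel : ∀ k, IsSelective (p k))
    (hinc : ∀ k l, k ≠ l → ¬RKle (p k) (p l)) {j : ℕ → ℕ} (hj : ∀ c, (j ⁻¹' {c}).Finite) :
    ∃ B : K → Set ℕ, (∀ k, B k ∈ p k) ∧ ∀ k l, ∀ m ∈ B k, ∀ n ∈ B l, (k ≠ l ∨ m ≠ n) →
      j m + 2 ≤ j n ∨ j n + 2 ≤ j m := by
  set R : ℕ → ℕ → Prop := fun m n => j m ≤ j n + 1 ∧ j n ≤ j m + 1
  have hR : ∀ k l, k ≠ l → ∀ᶠ x in (p k : Filter ℕ) ×ˢ (p l : Filter ℕ), ¬R x.1 x.2 := by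
    intro k l hkl
    obtain ⟨Y, hY, hinj⟩ := (hsel l).exists_injOn hj
    have hinj' : InjOn (fun n => j n + 1) Y := (add_left_injective 1).comp_injOn hinj
    filter_upwards [eventually_prod_ne_of_not_rkle (hinc k l hkl) (a := j) hY hinj,
      eventually_prod_ne_of_not_rkle (hinc k l hkl) (a := fun n => j n + 1) hY hinj,
      eventually_prod_ne_of_not_rkle (hinc k l hkl) (a := j) hY hinj'] with x h₁ h₂ h₃ h
    simp only [R] at h
    omega
  obtain ⟨B, hB, hBR⟩ := exists_mem_forall_not_rel hsel (fun h => ⟨h.2, h.1⟩)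
    (fun m => ((finite_le_nat (j m + 1)).preimage' fun c _ => hj c).subset fun n hn => hn.2) hR
  choose Y hY hYsep using fun k => (hsel k).exists_mem_separated hj
  refine ⟨fun k => B k ∩ Y k, fun k => inter_mem (hB k) (hY k), fun k l m hm n hn hne => ?_⟩
  rcases eq_or_ne k l with rfl | hkl
  · exact hYsep k m hm.2 n hn.2 (hne.resolve_left fun h => h rfl)
  · have hmn := hBR k l hkl m hm.1 n hn.1
    simp only [R] at hmn
    omega

theorem exists_disjoint_diagonal (hsel : ∀ k, IsSelective (p k))
    (hinc : ∀ k l, k ≠ l → ¬RKle (p k) (p l)) {A : ℕ → K → Set ℕ} (hA : ∀ N k, A N k ∈ p k) :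
    ∃ B : K → Set ℕ, (∀ k, B k ∈ p k) ∧ (∀ k l n, n ∈ B k → n ∈ B l → k = l) ∧
      ∀ k l, ∀ n ∈ B k, ∀ m ∈ B l, m < n → n ∈ A m k := by
  obtain ⟨c, hc⟩ := exists_injective_nat K
  obtain ⟨X, hX, h, hh⟩ := exists_eventual_bound hsel hA hc
  obtain ⟨j, hj_mono, hj_fin, hjh⟩ := exists_monotone_step_function h
  obtain ⟨B, hB, hsep⟩ := exists_mem_separated hsel hinc hj_fin
  refine ⟨fun k => B k ∩ (X k ∩ Ici (h (c k))), fun k => ?_, fun k l n hk hl => ?_,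
    fun k l n hn m hm hmn => ?_⟩
  · exact inter_mem (hB k) (inter_mem (hX k)
      ((hsel k).1.le_cofinite (Nat.cofinite_eq_atTop ▸ Ici_mem_atTop _)))
  · by_contra hkl
    have := hsep k l n hk.1 n hl.1 (.inl hkl)
    omega
  · have hjmn : j m + 2 ≤ j n :=
      (hsep l k m hm.1 n hn.1 (.inr hmn.ne)).resolve_right
        fun hle => by have := hj_mono hmn.le; omega
    refine hh (max m (c k)) k (le_max_right _ _) m (le_max_left _ _) n hn.2.1 ?_
    rcases max_choice m (c k) with hmax | hmax <;> rw [hmax]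
    · exact hjh m n hjmn
    · exact hn.2.2

theorem exists_strictMono_diagonal [Nonempty K] (hsel : ∀ k, IsSelective (p k))
    (hinc : ∀ k l, k ≠ l → ¬RKle (p k) (p l)) {A : ℕ → K → Set ℕ} (hA : ∀ N k, A N k ∈ p k) :
    ∃ s : ℕ → ℕ, StrictMono s ∧ ∃ c : ℕ → K,
      (∀ k, (fun i => s (i + 1)) '' (c ⁻¹' {k}) ∈ p k) ∧ ∀ i, s (i + 1) ∈ A (s i) (c i) := by
  obtain ⟨B, hB, hdisj, hdiag⟩ := exists_disjoint_diagonal hsel hinc hA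
  set s : ℕ → ℕ := Nat.nth fun n => ∃ k, n ∈ B k
  have hinf : {n | ∃ k, n ∈ B k}.Infinite := fun hfin =>
    have k := Classical.arbitrary K
    Ultrafilter.compl_mem_iff_notMem.1 ((hsel k).1.le_cofinite hfin.compl_mem_cofinite)
      (mem_of_superset (hB k) fun n hn => ⟨k, hn⟩)
  have hs : StrictMono s := Nat.nth_strictMono hinf
  choose c hc using fun i => Nat.nth_mem_of_infinite hinf i
  refine ⟨s, hs, fun i => c (i + 1), fun k => ?_, fun i =>
    hdiag _ _ _ (hc (i + 1)) _ (hc i) (hs i.lt_succ_self)⟩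
  have hne : {s 0}ᶜ ∈ p k := (hsel k).1.le_cofinite (finite_singleton _).compl_mem_cofinite
  filter_upwards [hB k, hne] with n hn hn0
  obtain ⟨i, rfl⟩ : n ∈ range s := by
    rw [Nat.range_nth_of_infinite hinf]; exact ⟨k, hn⟩
  obtain ⟨i, rfl⟩ := Nat.exists_eq_succ_of_ne_zero fun h0 : i = 0 => hn0 (congrArg s h0)
  exact ⟨i, hdisj _ _ _ (hc (i + 1)) hn, rfl⟩

end Family

end SelectiveUltrafilters

section Torus

open MeasureTheory UnitAddTorus

theorem mFourier_apply_eq_toCircle_sum {d : Type*} [Fintype d] (m : d → ℤ) (y : UnitAddTorus d) :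
    mFourier m y = (∑ j, m j • y j).toCircle := by
  have hsum : ∀ s : Finset d, (AddCircle.toCircle (∑ j ∈ s, m j • y j) : ℂ) =
      ∏ j ∈ s, ((m j • y j).toCircle : ℂ) := by
    classical
    intro s
    induction s using Finset.induction_on with
    | empty => simp
    | insert j s hj ih =>
      rw [Finset.sum_insert hj, Finset.prod_insert hj, AddCircle.toCircle_add, Circle.coe_mul, ih]
  exact (hsum Finset.univ).symm

theorem measure_ext_of_integral_mFourier {d : Type*} [Fintype d] {μ ν : Measure (UnitAddTorus d)}
    [IsFiniteMeasure μ] [IsFiniteMeasure ν]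
    (h : ∀ m : d → ℤ, ∫ y, mFourier m y ∂μ = ∫ y, mFourier m y ∂ν) : μ = ν := by
  have hint : ∀ (g : C(UnitAddTorus d, ℂ)) (ρ : Measure (UnitAddTorus d)) [IsFiniteMeasure ρ],
      Integrable g ρ := fun g ρ _ => (BoundedContinuousFunction.mkOfCompact g).integrable ρ
  have hspan : ∀ g ∈ Submodule.span ℂ (range (mFourier (d := d))), ∫ y, g y ∂μ = ∫ y, g y ∂ν := by
    intro g hg
    induction hg using Submodule.span_induction with
    | mem g hg => obtain ⟨m, rfl⟩ := hg; exact h m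
    | zero => simp
    | add g₁ g₂ _ _ ih₁ ih₂ =>
      simp only [ContinuousMap.add_apply]
      rw [integral_add (hint g₁ μ) (hint g₂ μ), integral_add (hint g₁ ν) (hint g₂ ν), ih₁, ih₂]
    | smul a g _ ih => simp only [ContinuousMap.smul_apply, integral_smul, ih]
  let toC := BoundedContinuousFunction.toContinuousMapStarₐ (α := UnitAddTorus d) (β := ℂ) ℂ
  have hA : ((mFourierSubalgebra d).comap toC).map toC = mFourierSubalgebra d :=
    SetLike.coe_injective <| by
      rw [StarSubalgebra.coe_map, StarSubalgebra.coe_comap]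
      exact image_preimage_eq _ fun g => ⟨BoundedContinuousFunction.mkOfCompact g, rfl⟩
  have hsep : (((mFourierSubalgebra d).comap toC).map toC).SeparatesPoints := by
    rw [hA]; exact mFourierSubalgebra_separatesPoints
  exact ext_of_forall_mem_subalgebra_integral_eq_of_polish hsep fun g hg =>
    hspan (toC g) (mFourierSubalgebra_coe (d := d) ▸ hg)

theorem integral_toCircle_eq_zero {X : Type*} [AddGroup X] [MeasurableSpace X] [MeasurableAdd X]
    (μ : Measure X) [μ.IsAddLeftInvariant] {T : ℝ} (hT : T ≠ 0) {χ : X →+ AddCircle T}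
    (hχ : χ ≠ 0) : ∫ x, ((χ x).toCircle : ℂ) ∂μ = 0 := by
  obtain ⟨a, ha⟩ := DFunLike.ne_iff.1 hχ
  have hinv : ((χ a).toCircle : ℂ) * ∫ x, ((χ x).toCircle : ℂ) ∂μ =
      ∫ x, ((χ x).toCircle : ℂ) ∂μ := by
    rw [← integral_const_mul]
    simp only [← Circle.coe_mul, ← AddCircle.toCircle_add, ← map_add]
    exact integral_add_left_eq_self (fun x => ((χ x).toCircle : ℂ)) a
  refine (mul_left_eq_self₀.1 hinv).resolve_left fun h => ha (AddCircle.injective_toCircle hT ?_)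
  rw [AddMonoidHom.zero_apply, AddCircle.toCircle_zero]
  exact Circle.ext h

theorem integral_mFourier_add_coe_eq_zero {d : Type*} [Fintype d] {L : AddSubgroup (UnitAddTorus d)}
    (μ : Measure L) [μ.IsAddLeftInvariant] {m : d → ℤ} {y : UnitAddTorus d} (hy : y ∈ L)
    (hm : ∑ j, m j • y j ≠ 0) (w : UnitAddTorus d) : ∫ l : L, mFourier m (w + l) ∂μ = 0 := by
  let χ : L →+ UnitAddCircle :=
    (∑ j, m j • Pi.evalAddMonoidHom (fun _ => UnitAddCircle) j).comp L.subtype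
  have hχ_apply : ∀ l : L, χ l = ∑ j, m j • (l : UnitAddTorus d) j := fun l => by simp [χ]
  have hχ : χ ≠ 0 := fun h0 => hm ((hχ_apply ⟨y, hy⟩).symm.trans (DFunLike.congr_fun h0 _))
  simp only [mFourier_apply_eq_toCircle_sum, Pi.add_apply, smul_add, Finset.sum_add_distrib,
    AddCircle.toCircle_add, Circle.coe_mul, integral_const_mul, ← hχ_apply]
  rw [integral_toCircle_eq_zero μ one_ne_zero hχ, mul_zero]

-- The Haar measure of `L` and its translate by `w` have the same Fourier coefficients, so `w ∈ L`.
theorem eq_top_of_isClosed_of_forall_exists_sum_ne_zero {d : Type*} [Fintype d]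
    {L : AddSubgroup (UnitAddTorus d)} (hL : IsClosed (L : Set (UnitAddTorus d)))
    (h : ∀ m : d → ℤ, m ≠ 0 → ∃ y ∈ L, ∑ j, m j • y j ≠ 0) : L = ⊤ := by
  have : CompactSpace L := isCompact_iff_compactSpace.1 hL.isCompact
  let haar : Measure L := Measure.addHaarMeasure ⊤
  have : IsProbabilityMeasure haar := ⟨Measure.addHaarMeasure_self⟩
  let translate (w : UnitAddTorus d) : Measure (UnitAddTorus d) := haar.map fun l : L => w + l
  have hmeas : ∀ w : UnitAddTorus d, Measurable fun l : L => w + (l : UnitAddTorus d) :=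
    fun w => by fun_prop
  have hprob : ∀ w, IsProbabilityMeasure (translate w) := fun w =>
    Measure.isProbabilityMeasure_map (hmeas w).aemeasurable
  have hfourier : ∀ m : d → ℤ, m ≠ 0 → ∀ w, ∫ y, mFourier m y ∂translate w = 0 := fun m hm w => by
    obtain ⟨y, hy, hne⟩ := h m hm
    rw [integral_map (hmeas w).aemeasurable (mFourier m).continuous.aestronglyMeasurable]
    exact integral_mFourier_add_coe_eq_zero haar hy hne w
  have htranslate : ∀ w, translate w = translate 0 := fun w =>
    measure_ext_of_integral_mFourier fun m => by
      rcases eq_or_ne m 0 with rfl | hm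
      · simp [mFourier_zero]
      · rw [hfourier m hm, hfourier m hm]
  refine eq_top_iff.2 fun w _ => ?_
  have huniv : (fun l : L => 0 + (l : UnitAddTorus d)) ⁻¹' L = Set.univ :=
    eq_univ_of_forall fun l => by simp
  have hpos : translate w (L : Set (UnitAddTorus d)) ≠ 0 := by
    rw [htranslate, Measure.map_apply (hmeas 0) hL.measurableSet, huniv, measure_univ]
    exact one_ne_zero
  rw [Measure.map_apply (hmeas w) hL.measurableSet] at hpos
  obtain ⟨l, hl⟩ := nonempty_of_measure_ne_zero hpos
  exact (L.add_mem_cancel_right l.2).1 hl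

end Torus

section Prescription

open scoped Topology

variable {I : Type*}

theorem finite_setOf_forall_abs_le (W : I →₀ ℤ) : {g : I →₀ ℤ | ∀ ξ, |g ξ| ≤ W ξ}.Finite := by
  classical
  exact (finite_Icc (-W) W).subset fun g hg =>
    ⟨fun ξ => (abs_le.1 (hg ξ)).1, fun ξ => (abs_le.1 (hg ξ)).2⟩

theorem eventually_exists_mul_lt_abs (W : I →₀ ℤ) (N : ℕ) :
    ∀ᶠ g : I →₀ ℤ in cofinite, ∃ ξ, N * W ξ < |g ξ| :=
  mem_of_superset (finite_setOf_forall_abs_le (N • W)).compl_mem_cofinite fun g hg => by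
    simpa using hg

theorem exists_hom_apply_self_eq_half_of_apply_ne_zero {g : I →₀ ℤ} {ξ : I} (h : g ξ ≠ 0) :
    ∃ ψ : (I →₀ ℤ) →+ UnitAddCircle, ψ g = ((1 / 2 : ℝ) : UnitAddCircle) ∧
      ∀ c : I →₀ ℤ, ‖ψ c‖ ≤ |(c ξ : ℝ)| / |(g ξ : ℝ)| := by
  have h' : (g ξ : ℝ) ≠ 0 := Int.cast_ne_zero.2 h
  set x : ℝ := 1 / (2 * g ξ) with hx
  refine ⟨(zmultiplesHom _ (x : UnitAddCircle)).comp (Finsupp.applyAddHom ξ), ?_, fun c => ?_⟩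
  · change g ξ • (x : UnitAddCircle) = _
    rw [← AddCircle.coe_zsmul, zsmul_eq_mul, hx]
    congr 1
    field_simp
  · calc ‖c ξ • (x : UnitAddCircle)‖ ≤ ‖c ξ‖ * ‖(x : UnitAddCircle)‖ := norm_zsmul_le _ _
      _ ≤ |(c ξ : ℝ)| * |x| := by
        rw [Int.norm_eq_abs]
        gcongr
        exact QuotientAddGroup.norm_mk_le_norm
      _ ≤ |(c ξ : ℝ)| / |(g ξ : ℝ)| := by
        rw [hx, div_eq_mul_inv _ |(g ξ : ℝ)|, abs_div, abs_mul, abs_one, abs_two, one_div]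
        gcongr
        linarith [abs_nonneg (g ξ : ℝ)]

-- `g` is sent to `1/2` through the coordinate where it is largest relative to `C`.
theorem exists_hom_apply_self_eq_half (C : Finset (I →₀ ℤ)) :
    ∃ Φ : (I →₀ ℤ) → (I →₀ ℤ) →+ UnitAddCircle,
      (∀ c ∈ C, Tendsto (fun g => Φ g c) cofinite (𝓝 0)) ∧
        ∀ g, g ≠ 0 → Φ g g = ((1 / 2 : ℝ) : UnitAddCircle) := by
  set W : I →₀ ℤ := ∑ c ∈ C, c.mapRange abs abs_zero
  have hW : ∀ c ∈ C, ∀ ξ, |c ξ| ≤ W ξ := fun c hc ξ => by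
    rw [Finsupp.finsetSum_apply]
    exact Finset.single_le_sum (f := fun c : I →₀ ℤ => c.mapRange abs abs_zero ξ)
      (fun c _ => abs_nonneg (c ξ)) hc
  have hex : ∀ g : I →₀ ℤ, ∃ ψ : (I →₀ ℤ) →+ UnitAddCircle, g ≠ 0 →
      ψ g = ((1 / 2 : ℝ) : UnitAddCircle) ∧
        ∀ c ∈ C, ∀ η, g η ≠ 0 → ‖ψ c‖ ≤ W η / |(g η : ℝ)| := fun g => by
    rcases eq_or_ne g 0 with rfl | hg
    · exact ⟨0, fun h => absurd rfl h⟩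
    obtain ⟨ξ, hξ, hmin⟩ := Finset.exists_min_image g.support (fun η => W η / |(g η : ℝ)|)
      (Finsupp.support_nonempty_iff.2 hg)
    obtain ⟨ψ, hψg, hψ⟩ :=
      exists_hom_apply_self_eq_half_of_apply_ne_zero (Finsupp.mem_support_iff.1 hξ)
    refine ⟨ψ, fun _ => ⟨hψg, fun c hc η hη => (hψ c).trans ?_⟩⟩
    refine le_trans ?_ (hmin η (Finsupp.mem_support_iff.2 hη))
    gcongr
    exact_mod_cast hW c hc ξ
  choose Φ hΦ using hex
  refine ⟨Φ, fun c hc => ?_, fun g hg => (hΦ g hg).1⟩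
  refine Metric.tendsto_nhds.2 fun ε hε => ?_
  obtain ⟨N, hN⟩ := exists_nat_one_div_lt hε
  filter_upwards [eventually_exists_mul_lt_abs W (N + 1)] with g ⟨η, hη⟩
  have hWη : 0 ≤ W η := (abs_nonneg (c η)).trans (hW c hc η)
  have hgη : g η ≠ 0 := abs_pos.1 (lt_of_le_of_lt (by positivity) hη)
  have hlt : W η * (N + 1 : ℝ) < |(g η : ℝ)| := by rw [mul_comm]; exact_mod_cast hη
  rw [dist_zero_right]
  calc ‖Φ g c‖ ≤ W η / |(g η : ℝ)| :=
        (hΦ g fun h => hgη (by rw [h, Finsupp.coe_zero, Pi.zero_apply])).2 c hc η hgη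
    _ ≤ 1 / (N + 1) := by
        rw [div_le_div_iff₀ (abs_pos.2 (Int.cast_ne_zero.2 hgη)) (by positivity), one_mul]
        exact hlt.le
    _ < ε := hN

section ApproximableTargets

variable {J G : Type*} [AddCommGroup G] {C : Finset G} {h : J → G} {ε δ : ℝ}
  {y z : J → UnitAddCircle}

/-- Some homomorphism into the circle is within `ε` of `y` along the family `h` and within `ε`
of `0` on `C`. -/
def IsApproximable (C : Finset G) (h : J → G) (ε : ℝ) (y : J → UnitAddCircle) : Prop :=
  ∃ φ : G →+ UnitAddCircle, (∀ c ∈ C, ‖φ c‖ ≤ ε) ∧ ∀ j, dist (φ (h j)) (y j) ≤ ε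

theorem isApproximable_zero (hε : 0 ≤ ε) : IsApproximable C h ε 0 :=
  ⟨0, fun c _ => by simpa using hε, fun j => by simpa using hε⟩

theorem IsApproximable.neg (hy : IsApproximable C h ε y) : IsApproximable C h ε (-y) := by
  obtain ⟨φ, hC, hφ⟩ := hy
  refine ⟨-φ, fun c hc => ?_, fun j => ?_⟩
  · rw [AddMonoidHom.neg_apply, norm_neg]
    exact hC c hc
  · rw [AddMonoidHom.neg_apply, Pi.neg_apply, dist_neg_neg]
    exact hφ j

theorem IsApproximable.add (hy : IsApproximable C h ε y) (hz : IsApproximable C h δ z) :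
    IsApproximable C h (ε + δ) (y + z) := by
  obtain ⟨φ, hφC, hφ⟩ := hy
  obtain ⟨ψ, hψC, hψ⟩ := hz
  exact ⟨φ + ψ, fun c hc => (norm_add_le _ _).trans (add_le_add (hφC c hc) (hψC c hc)),
    fun j => (dist_add_add_le _ _ _ _).trans (add_le_add (hφ j) (hψ j))⟩

theorem IsApproximable.of_dist_le [Fintype J] (hy : IsApproximable C h ε y) (hyz : dist y z ≤ δ) :
    IsApproximable C h (ε + δ) z := by
  obtain ⟨φ, hC, hφ⟩ := hy
  have hδ : 0 ≤ δ := dist_nonneg.trans hyz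
  exact ⟨φ, fun c hc => (hC c hc).trans (le_add_of_nonneg_right hδ), fun j =>
    (dist_triangle _ _ _).trans (add_le_add (hφ j) ((dist_le_pi_dist y z j).trans hyz))⟩

/-- The targets which, for every `ε > 0` and `p`-almost every `n`, are approximable up to `ε`
along the family of `n`-th terms of `f`. -/
def limitTargets (p : Filter ℕ) (C : Finset G) (f : J → ℕ → G) :
    AddSubgroup (J → UnitAddCircle) where
  carrier := {y | ∀ ε > 0, ∀ᶠ n in p, IsApproximable C (fun j => f j n) ε y}
  zero_mem' _ hε := .of_forall fun _ => isApproximable_zero hε.le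
  neg_mem' hy ε hε := (hy ε hε).mono fun _ => .neg
  add_mem' hy hz ε hε := by
    filter_upwards [hy _ (half_pos hε), hz _ (half_pos hε)] with n hy hz
    exact add_halves ε ▸ hy.add hz

theorem isClosed_limitTargets [Finite J] (p : Filter ℕ) (C : Finset G) (f : J → ℕ → G) :
    IsClosed (limitTargets p C f : Set (J → UnitAddCircle)) := by
  cases nonempty_fintype J
  refine isClosed_of_closure_subset fun y hy ε hε => ?_
  obtain ⟨z, hz, hyz⟩ := Metric.mem_closure_iff.1 hy _ (half_pos hε)
  filter_upwards [hz _ (half_pos hε)] with n hn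
  exact add_halves ε ▸ hn.of_dist_le (dist_comm y z ▸ hyz.le)

theorem eventually_forall_isApproximable_of_limitTargets_eq_top [Finite J] {p : Filter ℕ}
    {f : J → ℕ → G} (htop : limitTargets p C f = ⊤) (hε : 0 < ε) :
    ∀ᶠ n in p, ∀ y, IsApproximable C (fun j => f j n) ε y := by
  cases nonempty_fintype J
  obtain ⟨net, -, hnet, hcover⟩ :=
    finite_cover_balls_of_compact (isCompact_univ (X := J → UnitAddCircle)) (half_pos hε)
  have happrox : ∀ y ∈ net, ∀ᶠ n in p, IsApproximable C (fun j => f j n) (ε / 2) y :=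
    fun y _ => (htop ▸ AddSubgroup.mem_top y : y ∈ limitTargets p C f) _ (half_pos hε)
  filter_upwards [(eventually_all_finite hnet).2 happrox] with n hn y
  obtain ⟨z, hz, hyz⟩ := mem_iUnion₂.1 (hcover (mem_univ y))
  exact add_halves ε ▸ (hn z hz).of_dist_le (Metric.mem_ball'.1 hyz).le

end ApproximableTargets

/-- The classes of the sequences `f j` in the ultrapower along `p` are `ℤ`-independent modulo the
constant sequences: every nontrivial integer combination takes each value on a `p`-small set. -/
def IndepModConst {J G : Type*} [AddCommGroup G] (p : Filter ℕ) (f : J → ℕ → G) : Prop :=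
  ∀ m : J →₀ ℤ, m ≠ 0 → Tendsto (Finsupp.linearCombination ℤ f m) p cofinite

theorem IndepModConst.comp {J J' G : Type*} [AddCommGroup G] {p : Filter ℕ} {f : J → ℕ → G}
    (hf : IndepModConst p f) {e : J' → J} (he : e.Injective) :
    IndepModConst p (f ∘ e) := fun m hm => by
  have hm' : m.mapDomain e ≠ 0 :=
    ((Finsupp.mapDomain_injective he).ne_iff' Finsupp.mapDomain_zero).2 hm
  simpa only [Finsupp.linearCombination_mapDomain] using hf _ hm'

theorem IndepModConst.tendsto_sum {J G : Type*} [Fintype J] [AddCommGroup G] {p : Filter ℕ}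
    {f : J → ℕ → G} (hf : IndepModConst p f) {m : J → ℤ} (hm : m ≠ 0) :
    Tendsto (fun n => ∑ j, m j • f j n) p cofinite := by
  convert hf ((Finsupp.linearEquivFunOnFinite ℤ ℤ J).symm m)
    ((LinearEquiv.map_ne_zero_iff _).2 hm) using 1
  ext n
  rw [Finsupp.linearCombination_eq_fintype_linearCombination_apply]
  simp [Fintype.linearCombination_apply]

-- The witness is a `p`-limit of the homomorphisms sending `∑ j, m j • f j n` to `1/2`.
theorem IndepModConst.exists_mem_limitTargets {J : Type*} [Fintype J] {p : Ultrafilter ℕ}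
    {f : J → ℕ → I →₀ ℤ} (hf : IndepModConst p f) (C : Finset (I →₀ ℤ)) {m : J → ℤ} (hm : m ≠ 0) :
    ∃ y ∈ limitTargets p C f, ∑ j, m j • y j ≠ 0 := by
  obtain ⟨Φ, hΦC, hΦ⟩ := exists_hom_apply_self_eq_half C
  set g : ℕ → I →₀ ℤ := fun n => ∑ j, m j • f j n
  have hg : Tendsto g p cofinite := hf.tendsto_sum hm
  set u : ℕ → J → UnitAddCircle := fun n j => Φ (g n) (f j n)
  obtain ⟨y, hy⟩ : ∃ y, Tendsto u p (𝓝 y) := ⟨_, (p.map u).le_nhds_lim⟩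
  refine ⟨y, fun ε hε => ?_, fun h0 => ?_⟩
  · have hC : ∀ᶠ n in p, ∀ c ∈ C, ‖Φ (g n) c‖ < ε :=
      (Finset.eventually_all C).2 fun c hc => by
      simpa only [dist_zero_right] using hg.eventually (Metric.tendsto_nhds.1 (hΦC c hc) ε hε)
    filter_upwards [hC, Metric.tendsto_nhds.1 hy ε hε] with n hCn hyn
    exact ⟨Φ (g n), fun c hc => (hCn c hc).le, fun j => (dist_le_pi_dist (u n) y j).trans hyn.le⟩
  · have hlim : Tendsto (fun n => ∑ j, m j • u n j) p (𝓝 (∑ j, m j • y j)) :=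
      tendsto_finsetSum _ fun j _ => ((tendsto_pi_nhds.1 hy j).const_smul (m j))
    have hhalf : ∀ᶠ n in p, ∑ j, m j • u n j = ((1 / 2 : ℝ) : UnitAddCircle) := by
      filter_upwards [hg.eventually (finite_singleton 0).compl_mem_cofinite] with n hn
      rw [← hΦ (g n) hn]
      simp [u, g]
    have heq := tendsto_nhds_unique (hlim.congr' hhalf) tendsto_const_nhds
    have hnorm := (AddCircle.norm_coe_eq_abs_iff (x := 1 / 2) 1 one_ne_zero).2 (by norm_num)
    rw [← heq, h0] at hnorm
    norm_num at hnorm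

theorem IndepModConst.eventually_forall_isApproximable {J : Type*} [Finite J] {p : Ultrafilter ℕ}
    {f : J → ℕ → I →₀ ℤ} (hf : IndepModConst p f) (C : Finset (I →₀ ℤ)) {ε : ℝ} (hε : 0 < ε) :
    ∀ᶠ n in p, ∀ y, IsApproximable C (fun j => f j n) ε y := by
  cases nonempty_fintype J
  refine eventually_forall_isApproximable_of_limitTargets_eq_top ?_ hε
  exact eq_top_of_isClosed_of_forall_exists_sum_ne_zero (isClosed_limitTargets _ C f)
    fun _ hm => hf.exists_mem_limitTargets C hm

section LimitHomomorphism

variable {G T : Type*} [AddCommGroup G]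

theorem exists_hom_dist_le_two_mul [NormedAddCommGroup T] [CompactSpace T] {φ : ℕ → G →+ T}
    {C : ℕ → Finset G} (hC : Monotone C) {ε : ℕ → ℝ} (hε : ∀ i, 0 ≤ ε i)
    (hε_half : ∀ i, ε (i + 1) ≤ ε i / 2)
    (hφ : ∀ i, ∀ c ∈ C i, dist (φ (i + 1) c) (φ i c) ≤ ε i) :
    ∃ ψ : G →+ T, ∀ i, ∀ c ∈ C i, dist (ψ c) (φ i c) ≤ 2 * ε i := by
  obtain ⟨x, hx⟩ : ∃ x : G → T, Tendsto (fun i c => φ i c) (hyperfilter ℕ) (𝓝 x) :=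
    ⟨_, ((hyperfilter ℕ).map fun i c => φ i c).le_nhds_lim⟩
  refine ⟨addMonoidHomOfTendsto x φ hx, fun i c hc => ?_⟩
  have htel : ∀ j, i ≤ j → dist (φ j c) (φ i c) ≤ 2 * ε i - 2 * ε j := fun j hij => by
    induction j, hij using Nat.le_induction with
    | base => simp
    | succ j hij ih =>
      have htri := dist_triangle (φ (j + 1) c) (φ j c) (φ i c)
      linarith [hφ j c (hC hij hc), hε_half j]
  have hlim : Tendsto (fun j => dist (φ j c) (φ i c)) (hyperfilter ℕ) (𝓝 (dist (x c) (φ i c))) :=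
    (tendsto_pi_nhds.1 hx c).dist tendsto_const_nhds
  refine le_of_tendsto hlim ?_
  filter_upwards [Nat.hyperfilter_le_atTop (eventually_ge_atTop i)] with j hij
  linarith [htel j hij, hε j]

theorem exists_hom_dist_apply_le {J : Type*} {C : Finset G} {h : J → G} {ε : ℝ}
    (happ : ∀ y, IsApproximable C h ε y) (φ : G →+ UnitAddCircle) (x : J → UnitAddCircle) :
    ∃ ψ : G →+ UnitAddCircle, (∀ c ∈ C, dist (ψ c) (φ c) ≤ ε) ∧
      ∀ j, dist (ψ (h j)) (x j) ≤ ε := by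
  obtain ⟨θ, hθC, hθ⟩ := happ fun j => x j - φ (h j)
  refine ⟨φ + θ, fun c hc => ?_, fun j => ?_⟩
  · rw [AddMonoidHom.add_apply, dist_self_add_left]
    exact hθC c hc
  · calc dist (φ (h j) + θ (h j)) (x j) = dist (θ (h j)) (x j - φ (h j)) := by
          rw [dist_eq_norm, dist_eq_norm, sub_sub_eq_add_sub, add_comm]
      _ ≤ ε := hθ j

theorem exists_hom_dist_apply_le_four_mul {J : ℕ → Type*} {C : ℕ → Finset G} (hC : Monotone C)
    {g h : ∀ i, J i → G} (hg : ∀ i j, g i j ∈ C i) (hh : ∀ i j, h i j ∈ C (i + 1)) {ε : ℕ → ℝ}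
    (hε : ∀ i, 0 ≤ ε i) (hε_half : ∀ i, ε (i + 1) ≤ ε i / 2)
    (happ : ∀ i y, IsApproximable (C i) (h i) (ε i) y) (φ₀ : G →+ UnitAddCircle) :
    ∃ φ : G →+ UnitAddCircle, (∀ c ∈ C 0, dist (φ c) (φ₀ c) ≤ 2 * ε 0) ∧
      ∀ i j, dist (φ (h i j)) (φ (g i j)) ≤ 4 * ε i := by
  choose next hnextC hnext using fun i (φ : G →+ UnitAddCircle) =>
    exists_hom_dist_apply_le (happ i) φ fun j => φ (g i j)
  let φ : ℕ → G →+ UnitAddCircle := Nat.rec φ₀ next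
  obtain ⟨ψ, hψ⟩ := exists_hom_dist_le_two_mul (φ := φ) hC hε hε_half fun i => hnextC i (φ i)
  refine ⟨ψ, hψ 0, fun i j => ?_⟩
  calc dist (ψ (h i j)) (ψ (g i j))
      ≤ dist (ψ (h i j)) (φ (i + 1) (h i j)) + dist (φ (i + 1) (h i j)) (φ i (g i j))
          + dist (φ i (g i j)) (ψ (g i j)) := dist_triangle4 _ _ _ _
    _ ≤ 2 * ε (i + 1) + ε i + 2 * ε i := by
        rw [dist_comm _ (ψ (g i j))]
        exact add_le_add (add_le_add (hψ (i + 1) _ (hh i j)) (hnext i (φ i) j)) (hψ i _ (hg i j))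
    _ ≤ 4 * ε i := by linarith [hε_half i]

end LimitHomomorphism

theorem exists_hom_forall_ne_zero {S : Finset (I →₀ ℤ)} (hS : 0 ∉ S) :
    ∃ φ : (I →₀ ℤ) →+ UnitAddCircle, ∀ d ∈ S, φ d ≠ 0 := by
  let toReal : (I →₀ ℤ) →+ (I →₀ ℝ) := Finsupp.mapRange.addMonoidHom (Int.castAddHom ℝ)
  have htoReal : Function.Injective toReal :=
    Finsupp.mapRange_injective _ (map_zero _) Int.cast_injective
  obtain ⟨F, hF⟩ := Module.exists_dual_forall_apply_ne_zero (K := ℝ) (v := fun d : S => toReal d)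
    fun d => (map_ne_zero_iff _ htoReal).2 fun h0 => hS (h0 ▸ d.2)
  have hsmall : ∀ᶠ t : ℝ in 𝓝[>] 0, ∀ d ∈ S, |t * F (toReal d)| < 1 / 2 :=
    (Finset.eventually_all S).2 fun d _ => by
      have hcont : Continuous fun t : ℝ => |t * F (toReal d)| := by fun_prop
      exact (hcont.tendsto' 0 0 (by simp)).mono_left nhdsWithin_le_nhds |>.eventually_lt_const
        (by norm_num)
  obtain ⟨t, ht, ht0⟩ := (hsmall.and self_mem_nhdsWithin).exists
  refine ⟨(QuotientAddGroup.mk' _).comp ((AddMonoidHom.mulLeft t).comp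
    (F.toAddMonoidHom.comp toReal)), fun d hd => norm_ne_zero_iff.1 ?_⟩
  change ‖((t * F (toReal d) : ℝ) : UnitAddCircle)‖ ≠ 0
  rw [(AddCircle.norm_coe_eq_abs_iff 1 one_ne_zero).2 (by simpa using (ht d hd).le)]
  exact abs_ne_zero.2 (mul_ne_zero (ne_of_gt ht0) (hF ⟨d, hd⟩))

theorem exists_monotone_finset_seq (J : Type*) [Countable J] :
    ∃ Φ : ℕ → Finset J, Monotone Φ ∧ ∀ j, ∀ᶠ N in atTop, j ∈ Φ N := by
  classical
  obtain ⟨Φ, hΦ, hlim⟩ := exists_seq_monotone_tendsto_atTop_atTop (Finset J)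
  refine ⟨Φ, hΦ, fun j => ?_⟩
  filter_upwards [hlim.eventually_ge_atTop {j}] with N hN
  exact hN (Finset.mem_singleton_self j)

section ControlledSet

variable {K : Type*} {ι : K → Type*} {G : Type*}

/-- The finite set on which a correction made at stage `N` has to be small: `S`, together with the
target of each sequence indexed by `Φ N` and the terms of that sequence up to the `N`-th. -/
def controlledSet [DecidableEq G] (S : Finset G) (Φ : ℕ → Finset (Σ k, ι k))
    (f : ∀ k, ι k → ℕ → G) (g : ∀ k, ι k → G) (N : ℕ) : Finset G :=
  S ∪ (Φ N).biUnion fun j => insert (g j.1 j.2) ((Finset.range (N + 1)).image (f j.1 j.2))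

variable [DecidableEq G] {S : Finset G} {Φ : ℕ → Finset (Σ k, ι k)} {f : ∀ k, ι k → ℕ → G}
  {g : ∀ k, ι k → G} {N : ℕ}

theorem subset_controlledSet : S ⊆ controlledSet S Φ f g N := Finset.subset_union_left

theorem target_mem_controlledSet {k : K} {j : ι k} (hj : ⟨k, j⟩ ∈ Φ N) :
    g k j ∈ controlledSet S Φ f g N :=
  Finset.mem_union_right _ (Finset.mem_biUnion.2 ⟨_, hj, Finset.mem_insert_self _ _⟩)

theorem term_mem_controlledSet {k : K} {j : ι k} (hj : ⟨k, j⟩ ∈ Φ N) :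
    f k j N ∈ controlledSet S Φ f g N :=
  Finset.mem_union_right _ (Finset.mem_biUnion.2 ⟨_, hj, Finset.mem_insert_of_mem
    (Finset.mem_image_of_mem _ (Finset.self_mem_range_succ N))⟩)

theorem monotone_controlledSet (hΦ : Monotone Φ) : Monotone (controlledSet S Φ f g) :=
  fun _ _ hMN => Finset.union_subset_union_right <|
    (Finset.biUnion_subset_biUnion_of_subset_left _ (hΦ hMN)).trans <|
      Finset.biUnion_mono fun _ _ => Finset.insert_subset_insert _ <|
        Finset.image_subset_image (Finset.range_mono (Nat.succ_le_succ hMN))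

end ControlledSet

theorem exists_hom_dist_le_along_diagonal {K : Type*} [Countable K] [Nonempty K]
    {p : K → Ultrafilter ℕ} (hsel : ∀ k, IsSelective (p k))
    (hinc : ∀ k l, k ≠ l → ¬RKle (p k) (p l)) {ι : K → Type*}
    {f : ∀ k, ι k → ℕ → I →₀ ℤ} (hf : ∀ k, IndepModConst (p k) (f k)) (g : ∀ k, ι k → I →₀ ℤ)
    (S : Finset (I →₀ ℤ)) {Φ : ℕ → Finset (Σ k, ι k)} (hΦ : Monotone Φ)
    (φ₀ : (I →₀ ℤ) →+ UnitAddCircle) {ε : ℝ} (hε : 0 < ε) :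
    ∃ s : ℕ → ℕ, StrictMono s ∧ ∃ c : ℕ → K,
      (∀ k, (fun i => s (i + 1)) '' (c ⁻¹' {k}) ∈ p k) ∧
      ∃ φ : (I →₀ ℤ) →+ UnitAddCircle, (∀ d ∈ S, dist (φ d) (φ₀ d) ≤ 2 * ε) ∧
        ∀ i (j : ι (c i)), ⟨c i, j⟩ ∈ Φ (s i) →
          dist (φ (f (c i) j (s (i + 1)))) (φ (g (c i) j)) ≤ 4 * (ε / 2 ^ i) := by
  classical
  set C := controlledSet S Φ f g
  let J (N : ℕ) (k : K) : Type _ := {j : ι k // ⟨k, j⟩ ∈ Φ N}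
  have hJ : ∀ N k, Finite (J N k) := fun N k =>
    .of_injective (fun j : J N k => (⟨⟨k, j⟩, j.2⟩ : Φ N)) fun j₁ j₂ h =>
      Subtype.ext (sigma_mk_injective (congrArg Subtype.val h))
  obtain ⟨s, hs, c, hsc, happ⟩ := exists_strictMono_diagonal hsel hinc
    (A := fun N k => {n | ∀ y, IsApproximable (C N) (fun j : J N k => f k j n) (ε / 2 ^ N) y})
    fun N k => ((hf k).comp Subtype.val_injective).eventually_forall_isApproximable _
      (by positivity)
  have hlt : ∀ i, s i < s (i + 1) := fun i => hs i.lt_succ_self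
  have hhalf : ∀ i, ε / 2 ^ s (i + 1) ≤ ε / 2 ^ s i / 2 := fun i => by
    rw [div_div, ← pow_succ]
    gcongr
    · exact one_le_two
    · exact hlt i
  obtain ⟨φ, hφS, hφ⟩ := exists_hom_dist_apply_le_four_mul (J := fun i => J (s i) (c i))
    ((monotone_controlledSet hΦ).comp hs.monotone)
    (g := fun i j => g (c i) j) (h := fun i j => f (c i) j (s (i + 1)))
    (fun i j => target_mem_controlledSet j.2)
    (fun i j => term_mem_controlledSet (hΦ (hlt i).le j.2))
    (ε := fun i => ε / 2 ^ s i) (fun i => by positivity) hhalf happ φ₀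
  refine ⟨s, hs, c, hsc, φ, fun d hd => (hφS d (subset_controlledSet hd)).trans ?_,
    fun i j hj => (hφ i ⟨j, hj⟩).trans ?_⟩
  · gcongr
    exact div_le_self hε.le (one_le_pow₀ one_le_two)
  · gcongr
    · exact one_le_two
    · exact hs.id_le i

theorem IsFreeUltrafilter.isPLim_of_dist_le {X : Type*} [PseudoMetricSpace X] {p : Ultrafilter ℕ}
    (hp : IsFreeUltrafilter p) {r : ℕ → ℕ} {A : Set ℕ} (hA : r '' A ∈ p) {u : ℕ → X} {x : X}
    {ε : ℕ → ℝ} (hε : Tendsto ε atTop (𝓝 0))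
    (hdist : ∀ᶠ i in atTop, i ∈ A → dist (u (r i)) x ≤ ε i) : IsPLim p u x := fun U hU => by
  obtain ⟨δ, hδ, hball⟩ := Metric.mem_nhds_iff.1 hU
  obtain ⟨i₀, hi₀⟩ := eventually_atTop.1 (hdist.and (hε.eventually_lt_const hδ))
  have hlate : (r '' Iio i₀)ᶜ ∈ p := hp.le_cofinite ((finite_Iio i₀).image r).compl_mem_cofinite
  filter_upwards [hA, hlate]
  rintro _ ⟨i, hi, rfl⟩ hlt
  obtain ⟨hle, hlt⟩ := hi₀ i (not_lt.1 fun h => hlt ⟨i, h, rfl⟩)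
  exact hball ((hle hi).trans_lt hlt)

section Ultrapower

theorem clsHom_const {κ : Cardinal} (p : Ultrafilter ℕ) (c : GZ κ) :
    clsHom κ p (fun _ => c) = Finsupp.linearCombination ℤ (clsChi κ p) c := by
  have hc : (fun _ => c) = Finsupp.linearCombination ℤ (fun ξ (_ : ℕ) => chi κ ξ) c := by
    ext n : 1
    simp only [Finsupp.linearCombination_apply, Finsupp.sum, chi, Finset.sum_apply, Pi.smul_apply,
      Finsupp.smul_single_one]
    exact c.sum_single.symm
  rw [hc]
  exact Finsupp.apply_linearCombination ℤ (clsHom κ p).toIntLinearMap _ c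

theorem indepModConst_of_linearIndependent {κ : Cardinal} {p : Ultrafilter ℕ} {J : Type*}
    {f : J → ℕ → GZ κ}
    (hf : LinearIndependent ℚ (Sum.elim (fun j => cls κ p (f j)) (clsChi κ p))) :
    IndepModConst (p : Filter ℕ) f := fun m hm => by
  have hfℤ : LinearIndependent ℤ (Sum.elim (fun j => cls κ p (f j)) (clsChi κ p)) :=
    hf.restrict_scalars' ℤ
  obtain ⟨hli, -, hdisj⟩ := linearIndependent_sum.1 hfℤ
  refine (p.map (Finsupp.linearCombination ℤ f m)).le_cofinite_or_eq_pure.resolve_right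
    fun ⟨c, hc⟩ => hm ?_
  have hconst : clsHom κ p (Finsupp.linearCombination ℤ f m) = clsHom κ p fun _ => c := by
    have hmem : {c} ∈ p.map (Finsupp.linearCombination ℤ f m) := hc ▸ Ultrafilter.mem_pure.2 rfl
    exact Germ.coe_eq.2 (mem_of_superset hmem fun n hn => congrArg (toQ κ) hn)
  have hcomb : clsHom κ p (Finsupp.linearCombination ℤ f m) =
      Finsupp.linearCombination ℤ (fun j => cls κ p (f j)) m :=
    Finsupp.apply_linearCombination ℤ (clsHom κ p).toIntLinearMap f m
  rw [hcomb, clsHom_const] at hconst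
  have hzero : Finsupp.linearCombination ℤ (fun j => cls κ p (f j)) m = 0 := by
    refine Submodule.disjoint_def.1 hdisj _ ?_ ?_
    · exact Finsupp.mem_span_range_iff_exists_finsupp.2 ⟨m, rfl⟩
    · exact Finsupp.mem_span_range_iff_exists_finsupp.2 ⟨c, hconst.symm⟩
  exact linearIndependent_iff.1 hli m hzero

end Ultrapower

theorem statement13_general {K : Type*} [Countable K] {p : K → Ultrafilter ℕ}
    (hsel : ∀ k, IsSelective (p k)) (hinc : ∀ k l, k ≠ l → ¬RKle (p k) (p l))
    {ι : K → Type*} [∀ k, Countable (ι k)] {f : ∀ k, ι k → ℕ → I →₀ ℤ}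
    (hf : ∀ k, IndepModConst (p k) (f k)) (g : ∀ k, ι k → I →₀ ℤ)
    {S : Finset (I →₀ ℤ)} (hS : 0 ∉ S) :
    ∃ φ : (I →₀ ℤ) →+ UnitAddCircle, (∀ d ∈ S, φ d ≠ 0) ∧
      ∀ k j, IsPLim (p k) (fun n => φ (f k j n)) (φ (g k j)) := by
  obtain ⟨φ₀, hφ₀⟩ := exists_hom_forall_ne_zero hS
  cases isEmpty_or_nonempty K
  · exact ⟨φ₀, hφ₀, isEmptyElim⟩
  have hsmall : ∀ᶠ ε : ℝ in 𝓝[>] 0, ∀ d ∈ S, 2 * ε < ‖φ₀ d‖ :=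
    (Finset.eventually_all S).2 fun d hd =>
      ((continuous_const_mul 2).tendsto' 0 0 (mul_zero 2)).mono_left nhdsWithin_le_nhds
        |>.eventually_lt_const (norm_pos_iff.2 (hφ₀ d hd))
  obtain ⟨ε, hεS, hε⟩ := (hsmall.and self_mem_nhdsWithin).exists
  obtain ⟨Φ, hΦ, hΦ_mem⟩ := exists_monotone_finset_seq (Σ k, ι k)
  obtain ⟨s, hs, c, hsc, φ, hφS, hφ⟩ :=
    exists_hom_dist_le_along_diagonal hsel hinc hf g S hΦ φ₀ hε
  refine ⟨φ, fun d hd h0 => ?_, fun k j => ?_⟩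
  · refine (hεS d hd).not_ge ?_
    simpa [h0] using hφS d hd
  · have hzero : Tendsto (fun i : ℕ => 4 * (ε / 2 ^ i)) atTop (𝓝 0) := by
      simpa using (tendsto_const_nhds.div_atTop
        (tendsto_pow_atTop_atTop_of_one_lt (one_lt_two (α := ℝ)))).const_mul 4
    refine (hsel k).1.isPLim_of_dist_le (hsc k) hzero ?_
    filter_upwards [hs.tendsto_atTop.eventually (hΦ_mem ⟨k, j⟩)] with i hi hik
    obtain rfl : c i = k := hik
    exact hφ i j hi

end Prescription

theorem statement13 (κ : Cardinal) (hκ : ℵ₀ ≤ κ) (hpow : κ ^ ℵ₀ = κ)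
    (p : ℕ → Ultrafilter ℕ) (hsel : ∀ k, IsSelective (p k))
    (hinc : ∀ k l, k ≠ l → RKIncomp (p k) (p l))
    (F : ℕ → Set (ℕ → GZ κ)) (hFc : ∀ k, (F k).Countable)
    (hFdist : ∀ k, ∀ f ∈ F k, ∀ g ∈ F k, f ≠ g → cls κ (p k) f ≠ cls κ (p k) g)
    (hFli : ∀ k, LinearIndependent ℚ
      (Sum.elim (fun f : F k => cls κ (p k) ↑f) (fun ξ : Idx κ => clsChi κ (p k) ξ)))
    (ξf : (ℕ → GZ κ) → Idx κ)
    (d d' : GZ κ) (hd : d ≠ 0) (hd' : d' ≠ 0)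
    (hdd' : Disjoint d.support d'.support)
    (D : Set (Idx κ)) (hDc : D.Countable) (hDi : D.Infinite)
    (hωD : ∀ ξ : Idx κ, (ξ : Ordinal) < Ordinal.omega0 → ξ ∈ D)
    (hdD : ↑d.support ⊆ D) (hd'D : ↑d'.support ⊆ D)
    (hFD : ∀ k : ℕ, ∀ f ∈ F k, ∀ n : ℕ, ↑(f n).support ⊆ D)
    (hξD : ∀ k : ℕ, ∀ f ∈ F k, ξf f ∈ D) :
    ∃ φ : ↥(Finsupp.supported ℤ ℤ D) →+ AddCircle (1 : ℝ),
      φ ⟨d, mem_suppD hdD⟩ ≠ 0 ∧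
      φ ⟨d', mem_suppD hd'D⟩ ≠ 0 ∧
      ∀ k : ℕ, ∀ f : ℕ → GZ κ, ∀ hf : f ∈ F k,
        IsPLim (p k) (fun n => φ ⟨f n, mem_suppD (hFD k f hf n)⟩)
          (φ ⟨chi κ (ξf f), chi_mem_suppD (hξD k f hf)⟩) := by
  have hcount : ∀ k, Countable (F k) := fun k => (hFc k).to_subtype
  obtain ⟨φ, hφS, hφ⟩ := statement13_general hsel (fun k l h => (hinc k l h).1)
    (fun k => indepModConst_of_linearIndependent (hFli k)) (fun _ f => chi κ (ξf f))
    (S := {d, d'}) (by simp [hd.symm, hd'.symm])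
  refine ⟨φ.comp (Finsupp.supported ℤ ℤ D).subtype.toAddMonoidHom,
    hφS d (by simp), hφS d' (by simp), fun k f hf => hφ k ⟨f, hf⟩⟩

end
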